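/- Let d ≥ 2, k ∈ ℕ, 1 ≤ p < ∞, q = ∞, and set s := d/p; assume 0 < s ≤ k. Then there is a constant c depending only on k and d such that for every f uniformly continuous on [0,1)^d with |f|_{V_{p∞}^k} < ∞ and every N ∈ ℕ there exist a family Δ_N of at most N dyadic subcubes of [0,1)^d whose union is [0,1)^d and a piecewise polynomial g_N of degree k−1 over Δ_N with ‖f − g_N‖_{L_∞([0,1)^d)} ≤ c · N^{−s/d} · |f|_{V_{p∞}^k}. -/

import Mathlib

/-! The proof approximates `f` at a fixed error threshold `η`, of order `|f|_V (A / N) ^ (1 / p)`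
with `A = 2 * 2 ^ d + 4`, and counts the cubes on which this fails.  Call a cube bad if no
polynomial of degree at most `k - 1` is within `η` of `f` on it.  By the definition of the
variation, a disjoint family of bad cubes has at most `N / A` members (`BadFamily.card_le`), and by
uniform continuity all sufficiently small cubes are good (`exists_fine_scale`).  It remains to
build a piecewise polynomial with error `O(η)` which has a single piece or at most `A` times as many
pieces as some disjoint family of bad cubes has members (`decomposition`).

Subdividing bad dyadic cubes until all of them are good does not suffice, since a bad cube may shrink
through arbitrarily many scales with only one bad child at each of them.  Such a chain is skipped
in one step: from a bad cube `Q` one passes to a smallest dyadic subcube `Q'` containing a bad cube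
and such that `Q \ Q'` contains none.  As `d ≥ 2`, a single polynomial `P` approximates `f` on the
whole ring `Q \ Q'` (`ring_approx`), and `P · 1_{Q \ Q'} = P · 1_Q - P · 1_{Q'}` costs two
(overlapping) dyadic cubes.  The `2 ^ d` children of `Q'` are treated recursively, and the minimality
of `Q'` supplies enough disjoint bad cubes to pay for the new pieces.

The ring is handled by chaining.  Any two points of it are joined by a bounded number of moves, each
sliding a good cube inside the ring by a bounded multiple of its side (this is where `d ≥ 2` enters)
or enlarging it.  The approximating polynomials of overlapping cubes are compared by the Remez-type
inequality `exists_remezConst`, which controls a polynomial far away from a cube by its size on it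
(`RemezConst.translate`).

Since `p ≥ 1`, one has `A ^ (1 / p) ≤ A`, so the constant depends on `k` and `d` only.  When
`|f|_V = 0`, `f` coincides with a polynomial, because polynomials of bounded degree form a closed
space (`approx_zero`); when `N = 1`, one polynomial on the unit cube is enough. -/

open MeasureTheory ENNReal Filter

noncomputable section

/-- A (half-open, axis-parallel) cube `x + [0,l)^d` in `ℝ^d`. -/
def IsCube (d : ℕ) (Q : Set (Fin d → ℝ)) : Prop :=
  ∃ (x : Fin d → ℝ) (l : ℝ), 0 < l ∧
    Q = Set.univ.pi fun i => Set.Ico (x i) (x i + l)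

/-- The half-open unit cube `[0,1)^d`. -/
def unitCube (d : ℕ) : Set (Fin d → ℝ) :=
  Set.univ.pi fun _ => Set.Ico (0 : ℝ) 1

/-- Dyadic subcubes `2^{-j}([0,1)^d + α)` of the unit cube `[0,1)^d`. -/
def IsDyadicCube (d : ℕ) (Q : Set (Fin d → ℝ)) : Prop :=
  ∃ (j : ℕ) (α : Fin d → ℕ), (∀ i, α i < 2 ^ j) ∧
    Q = Set.univ.pi fun i => Set.Ico ((α i : ℝ) / 2 ^ j) (((α i : ℝ) + 1) / 2 ^ j)

/-- `E_k(f;S;L_q)`: best `L_q(S)`-approximation of `f` by polynomials in `d`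
variables of total degree at most `k-1`. -/
def Ek (d k : ℕ) (q : ℝ≥0∞) (f : (Fin d → ℝ) → ℝ) (S : Set (Fin d → ℝ)) : ℝ≥0∞ :=
  ⨅ (m : MvPolynomial (Fin d) ℝ) (_ : m.totalDegree ≤ k - 1),
    eLpNorm (fun x => f x - MvPolynomial.eval x m) q (volume.restrict S)

/-- The `(k,p)`-variation of `f` on `S`, computed in `L_q`: the supremum over all
finite disjoint families of cubes contained in `S` of `(Σ_Q E_k(f;Q;L_q)^p)^{1/p}`. -/
def varpk (d k : ℕ) (p : ℝ) (q : ℝ≥0∞) (f : (Fin d → ℝ) → ℝ) (S : Set (Fin d → ℝ)) : ℝ≥0∞ :=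
  ⨆ (Δ : Finset (Set (Fin d → ℝ)))
    (_ : ∀ Q ∈ Δ, IsCube d Q ∧ Q ⊆ S)
    (_ : (Δ : Set (Set (Fin d → ℝ))).PairwiseDisjoint id),
    (∑ Q ∈ Δ, Ek d k q f Q ^ p) ^ (1 / p)

/-- The piecewise polynomial `Σ_{Q ∈ Δ} P_Q · 1_Q`. -/
def piecewisePoly (d : ℕ) (Δ : Finset (Set (Fin d → ℝ)))
    (P : Set (Fin d → ℝ) → MvPolynomial (Fin d) ℝ) : (Fin d → ℝ) → ℝ :=
  fun x => ∑ Q ∈ Δ, Q.indicator (fun y => MvPolynomial.eval y (P Q)) x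

end

/-- The cube `y + [0,r)^d`. -/
def cubeAt {d : ℕ} (y : Fin d → ℝ) (r : ℝ) : Set (Fin d → ℝ) :=
  Set.univ.pi fun i => Set.Ico (y i) (y i + r)

lemma mem_cubeAt {d : ℕ} {y x : Fin d → ℝ} {r : ℝ} :
    x ∈ cubeAt y r ↔ ∀ i, y i ≤ x i ∧ x i < y i + r := by
  simp [cubeAt, Set.mem_pi]

/-- `f` is uniformly within `η` of some polynomial of total degree at most `k - 1` on `S`.  This is
the pointwise form of `E_k(f;S;L_∞) ≤ η`; cubes where it fails are called bad below. -/
def Approx (d k : ℕ) (f : (Fin d → ℝ) → ℝ) (η : ℝ) (S : Set (Fin d → ℝ)) : Prop :=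
  ∃ m : MvPolynomial (Fin d) ℝ, m.totalDegree ≤ k - 1 ∧ ∀ x ∈ S, |f x - MvPolynomial.eval x m| ≤ η

/-! ### A Remez-type inequality for polynomials on cubes -/

/-- One-dimensional extrapolation: Lagrange interpolation at the nodes `i / (300 k)`, all lying in
`[0, 1/300)`, bounds the value at `1` of a polynomial of degree less than `k`. -/
lemma exists_extrapolation_const (k : ℕ) (hk : 1 ≤ k) :
    ∃ C : ℝ, 1 ≤ C ∧ ∀ (q : Polynomial ℝ) (M : ℝ), 0 ≤ M → q.natDegree ≤ k - 1 →
      (∀ t : ℝ, 0 ≤ t → t < 1 / 300 → |q.eval t| ≤ M) → |q.eval 1| ≤ C * M := by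
  have hk0 : (0 : ℝ) < k := by exact_mod_cast hk
  set v : ℕ → ℝ := fun i => i / (300 * k) with hv
  set s := Finset.range k with hs
  refine ⟨1 + ∑ i ∈ s, |(Lagrange.basis s v i).eval 1|, ?_, ?_⟩
  · have : 0 ≤ ∑ i ∈ s, |(Lagrange.basis s v i).eval 1| :=
      Finset.sum_nonneg fun _ _ => abs_nonneg _
    linarith
  intro q M hM hq hb
  have hinj : Set.InjOn v s := by
    intro a _ b _ hab
    simp only [hv] at hab
    field_simp at hab
    exact_mod_cast hab
  have hdeg : q.degree < (s.card : WithBot ℕ) := by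
    refine lt_of_le_of_lt Polynomial.degree_le_natDegree ?_
    rw [hs, Finset.card_range]
    exact_mod_cast (by omega : q.natDegree < k)
  have h1 := Lagrange.eq_interpolate hinj hdeg
  have h2 : q.eval 1 = ∑ i ∈ s, q.eval (v i) * (Lagrange.basis s v i).eval 1 := by
    conv_lhs => rw [h1]
    simp [Lagrange.interpolate_apply, Polynomial.eval_finsetSum]
  rw [h2]
  calc |∑ i ∈ s, q.eval (v i) * (Lagrange.basis s v i).eval 1|
      ≤ ∑ i ∈ s, |q.eval (v i) * (Lagrange.basis s v i).eval 1| := Finset.abs_sum_le_sum_abs _ _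
    _ ≤ ∑ i ∈ s, M * |(Lagrange.basis s v i).eval 1| := by
        refine Finset.sum_le_sum fun i hi => ?_
        rw [abs_mul]
        refine mul_le_mul_of_nonneg_right (hb _ ?_ ?_) (abs_nonneg _)
        · simp only [hv]; positivity
        · have : (i : ℝ) < k := by exact_mod_cast Finset.mem_range.1 hi
          simp only [hv]
          rw [div_lt_div_iff₀ (by positivity) (by norm_num)]
          linarith
    _ = (∑ i ∈ s, |(Lagrange.basis s v i).eval 1|) * M := by
        rw [Finset.sum_mul]; exact Finset.sum_congr rfl fun _ _ => mul_comm _ _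
    _ ≤ _ := by nlinarith

/-- `C` is admissible in the Remez-type inequality: a polynomial bounded by `M` on a cube of side
`ρ` with lower corner `c` is bounded by `C * M` at all points within sup-norm distance `100 ρ` of
`c`. -/
def RemezConst (d k : ℕ) (C : ℝ) : Prop :=
  1 ≤ C ∧ ∀ (q : MvPolynomial (Fin d) ℝ) (M ρ : ℝ) (c w : Fin d → ℝ), 0 ≤ M → 0 < ρ →
    q.totalDegree ≤ k - 1 → (∀ v ∈ cubeAt c ρ, |MvPolynomial.eval v q| ≤ M) →
    (∀ i, |w i - c i| ≤ 100 * ρ) → |MvPolynomial.eval w q| ≤ C * M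

/-- Restriction to the segment from the centre of the cube to `w` reduces the Remez-type inequality
to the one-dimensional extrapolation bound. -/
lemma exists_remezConst (d k : ℕ) (hk : 1 ≤ k) : ∃ C, RemezConst d k C := by
  obtain ⟨C, hC1, hC⟩ := exists_extrapolation_const k hk
  refine ⟨C, hC1, ?_⟩
  intro q M ρ c w hM hρ hq hb hw
  set y : Fin d → ℝ := fun i => c i + ρ / 2 with hy
  set L : Fin d → Polynomial ℝ :=
    fun i => Polynomial.C (w i - y i) * Polynomial.X + Polynomial.C (y i) with hL
  set Q := MvPolynomial.aeval L q with hQ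
  have hev : ∀ t : ℝ, Q.eval t = MvPolynomial.eval (fun i => (w i - y i) * t + y i) q := by
    intro t
    rw [hQ, ← Polynomial.coe_evalRingHom, MvPolynomial.aeval_def, MvPolynomial.hom_eval₂,
      MvPolynomial.eval, MvPolynomial.coe_eval₂Hom]
    congr 1
    · ext; simp
    · ext i; simp [hL]
  have hdeg : Q.natDegree ≤ k - 1 := by
    have := MvPolynomial.aeval_natDegree_le (n := 1) q hq L
      (fun i => Polynomial.natDegree_linear_le)
    simpa using this
  have := hC Q M hM hdeg ?_
  · rw [hev] at this
    simpa using this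
  intro t ht0 ht1
  rw [hev]
  apply hb
  rw [mem_cubeAt]
  intro i
  have h := abs_le.1 (hw i)
  have h3 : |(w i - y i) * t| < ρ / 2 := by
    rw [abs_mul, abs_of_nonneg ht0]
    have : |w i - y i| ≤ 101 * ρ := by
      rw [abs_le]; simp only [hy]; constructor <;> linarith
    nlinarith
  have h4 := abs_lt.1 h3
  simp only [hy] at h4 ⊢
  constructor <;> linarith

/-- Two polynomials approximating `f` within `η` on a common cube differ by at most `2 C η` on a
large dilate of it. -/
lemma RemezConst.diff_le {d k : ℕ} {C : ℝ} (hC : RemezConst d k C) {f : (Fin d → ℝ) → ℝ}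
    {η ρ : ℝ} (hη : 0 ≤ η) (hρ : 0 < ρ) {m₁ m₂ : MvPolynomial (Fin d) ℝ}
    (h₁ : m₁.totalDegree ≤ k - 1) (h₂ : m₂.totalDegree ≤ k - 1) {c w : Fin d → ℝ}
    (hf₁ : ∀ x ∈ cubeAt c ρ, |f x - MvPolynomial.eval x m₁| ≤ η)
    (hf₂ : ∀ x ∈ cubeAt c ρ, |f x - MvPolynomial.eval x m₂| ≤ η)
    (hw : ∀ i, |w i - c i| ≤ 100 * ρ) :
    |MvPolynomial.eval w m₁ - MvPolynomial.eval w m₂| ≤ 2 * C * η := by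
  have := hC.2 (m₁ - m₂) (2 * η) ρ c w (by linarith) hρ
    ((MvPolynomial.totalDegree_sub _ _).trans (max_le h₁ h₂)) ?_ hw
  · rw [map_sub] at this; linarith
  · intro v hv
    rw [map_sub]
    have a := abs_le.1 (hf₁ v hv)
    have b := abs_le.1 (hf₂ v hv)
    rw [abs_le]; constructor <;> linarith

/-! ### Chaining along translated cubes -/

/-- If every cube obtained by sliding `y₀ + [0,r)^d` straight to `y₁ + [0,r)^d` admits an
`η`-approximation, then approximating polynomials at the two ends are close near `y₀`.  The sliding
is cut into eight steps of length at most `r / 2`, so that consecutive cubes share a cube of side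
`r / 2`. -/
lemma RemezConst.translate {d k : ℕ} {C : ℝ} (hC : RemezConst d k C) {f : (Fin d → ℝ) → ℝ}
    {η r : ℝ} (hη : 0 ≤ η) (hr : 0 < r) {y₀ y₁ : Fin d → ℝ}
    (hseg : ∀ t : ℝ, 0 ≤ t → t ≤ 1 →
      Approx d k f η (cubeAt (fun i => y₀ i + t * (y₁ i - y₀ i)) r))
    (hd : ∀ i, |y₁ i - y₀ i| ≤ 4 * r) {m₀ m₁ : MvPolynomial (Fin d) ℝ}
    (h₀ : m₀.totalDegree ≤ k - 1) (h₁ : m₁.totalDegree ≤ k - 1)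
    (hf₀ : ∀ x ∈ cubeAt y₀ r, |f x - MvPolynomial.eval x m₀| ≤ η)
    (hf₁ : ∀ x ∈ cubeAt y₁ r, |f x - MvPolynomial.eval x m₁| ≤ η)
    {w : Fin d → ℝ} (hw : ∀ i, |w i - y₀ i| ≤ 8 * r) :
    |MvPolynomial.eval w m₀ - MvPolynomial.eval w m₁| ≤ 18 * C * η := by
  have key : ∀ s : ℕ, s ≤ 8 → ∀ m : MvPolynomial (Fin d) ℝ, m.totalDegree ≤ k - 1 →
      (∀ x ∈ cubeAt (fun i => y₀ i + (s / 8 : ℝ) * (y₁ i - y₀ i)) r,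
        |f x - MvPolynomial.eval x m| ≤ η) →
      |MvPolynomial.eval w m₀ - MvPolynomial.eval w m| ≤ (s + 1) * (2 * C * η) := by
    intro s
    induction s with
    | zero =>
      intro _ m hm hfm
      have := hC.diff_le hη hr h₀ hm hf₀ (w := w) (by simpa using hfm)
        (fun i => (hw i).trans (by linarith))
      simpa using this
    | succ s ih =>
      intro hs m hm hfm
      have hs' : ((s : ℝ) + 1) ≤ 8 := by exact_mod_cast hs
      obtain ⟨p, hp, hfp⟩ := hseg (s / 8) (by positivity) (by linarith)
      have h1 := ih (by omega) p hp hfp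
      have h2 := hC.diff_le (f := f) hη (half_pos hr) hp hm (w := w)
        (c := fun i => max (y₀ i + (s / 8 : ℝ) * (y₁ i - y₀ i))
          (y₀ i + ((s + 1 : ℕ) / 8 : ℝ) * (y₁ i - y₀ i))) ?_ ?_ ?_
      · have := abs_sub_le (MvPolynomial.eval w m₀) (MvPolynomial.eval w p)
          (MvPolynomial.eval w m)
        push_cast
        linarith
      · intro x hx
        apply hfp
        rw [mem_cubeAt] at hx ⊢
        intro i
        have h := abs_le.1 (hd i)
        have hxi := hx i
        push_cast at hxi
        refine ⟨(le_max_left _ _).trans hxi.1, lt_of_lt_of_le hxi.2 ?_⟩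
        have : max (y₀ i + (s / 8 : ℝ) * (y₁ i - y₀ i))
          (y₀ i + ((s + 1) / 8 : ℝ) * (y₁ i - y₀ i)) ≤
            y₀ i + (s / 8 : ℝ) * (y₁ i - y₀ i) + r / 2 := max_le (by linarith) (by linarith)
        linarith
      · intro x hx
        apply hfm
        rw [mem_cubeAt] at hx ⊢
        intro i
        have h := abs_le.1 (hd i)
        have hxi := hx i
        push_cast at hxi ⊢
        refine ⟨(le_max_right _ _).trans hxi.1, lt_of_lt_of_le hxi.2 ?_⟩
        have : max (y₀ i + (s / 8 : ℝ) * (y₁ i - y₀ i))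
          (y₀ i + ((s + 1) / 8 : ℝ) * (y₁ i - y₀ i)) ≤
            y₀ i + ((s + 1) / 8 : ℝ) * (y₁ i - y₀ i) + r / 2 := max_le (by linarith) (by linarith)
        linarith
      · intro i
        have h := abs_le.1 (hd i)
        have h' := abs_le.1 (hw i)
        have hs0 : (0 : ℝ) ≤ s := by positivity
        have b1 : |(s / 8 : ℝ) * (y₁ i - y₀ i)| ≤ 4 * r := by
          rw [abs_mul, abs_of_nonneg (by positivity)]
          have := hd i
          nlinarith [abs_nonneg (y₁ i - y₀ i)]
        have b2 : |((s + 1 : ℕ) / 8 : ℝ) * (y₁ i - y₀ i)| ≤ 4 * r := by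
          rw [abs_mul, abs_of_nonneg (by positivity)]
          have := hd i
          push_cast
          nlinarith [abs_nonneg (y₁ i - y₀ i)]
        have b1 := abs_le.1 b1
        have b2 := abs_le.1 b2
        rw [abs_le]
        rcases max_choice (y₀ i + (s / 8 : ℝ) * (y₁ i - y₀ i))
          (y₀ i + ((s + 1 : ℕ) / 8 : ℝ) * (y₁ i - y₀ i)) with e | e <;> rw [e] <;>
          constructor <;> linarith
  have := key 8 le_rfl m₁ h₁ (by
    intro x hx
    apply hf₁
    convert hx using 3
    push_cast; ring)
  push_cast at this
  linarith

/-! ### Approximation on the difference of two cubes -/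

/-- Left end of the slab of `x + [0,L)^d` lying below (`b = false`) or above (`b = true`) the
subcube `a + [0,l)^d` in direction `i`. -/
def slabLo {d : ℕ} (x a : Fin d → ℝ) (l : ℝ) (i : Fin d) (b : Bool) : ℝ :=
  if b then a i + l else x i

/-- Right end of the slab of `x + [0,L)^d` lying below (`b = false`) or above (`b = true`) the
subcube `a + [0,l)^d` in direction `i`. -/
def slabHi {d : ℕ} (x a : Fin d → ℝ) (L : ℝ) (i : Fin d) (b : Bool) : ℝ :=
  if b then x i + L else a i

/-- Sliding the interval `[y, y + r)` until it lies in `[u, w)` moves it by at most `4 r`, provided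
`[u, w)` is one of the two gaps between `[a, a + l)` and the ends of `[x, x + L)`, has length at
least `L / 4`, and `[y, y + r)` is near `[a, a + l)` unless `r = L / 4`. -/
lemma slide_dist {x a l L y z r : ℝ} (b : Bool) (hr : 0 < r)
    (hrL : r ≤ L / 4) (hy : x ≤ y) (hy' : y + r ≤ x + L)
    (hyz : y ≤ z) (hzy : z < y + r)
    (hbig : L / 4 ≤ (if b then x + L else a) - (if b then a + l else x))
    (hcase : r = L / 4 ∨ (l ≤ r ∧ (z < a → a - x ≤ r) ∧ (a + l ≤ z → x + L - (a + l) ≤ r))) :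
    |max (if b then a + l else x) (min y ((if b then x + L else a) - r)) - y| ≤ 4 * r := by
  cases b
  · simp only [Bool.false_eq_true, if_false] at hbig ⊢
    rw [abs_le]
    rcases le_total y (a - r) with h | h
    · rw [min_eq_left h, max_eq_right hy]; constructor <;> linarith
    · rw [min_eq_right h, max_eq_right (by linarith)]
      refine ⟨?_, by linarith⟩
      rcases hcase with h1 | ⟨h1, h2, h3⟩
      · linarith
      · rcases lt_or_ge z (a + l) with h4 | h4
        · linarith
        · have := h3 h4; linarith
  · simp only [if_true] at hbig ⊢
    rw [min_eq_left (by linarith), abs_le]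
    rcases le_total y (a + l) with h | h
    · rw [max_eq_left h]
      refine ⟨by linarith, ?_⟩
      rcases hcase with h1 | ⟨h1, h2, h3⟩
      · linarith
      · rcases lt_or_ge z a with h4 | h4
        · have := h2 h4; linarith
        · linarith
    · rw [max_eq_right h]; constructor <;> linarith

lemma segment_mem {u w p q r t : ℝ} (ht0 : 0 ≤ t) (ht1 : t ≤ 1) (hp : u ≤ p) (hq : u ≤ q)
    (hp' : p + r ≤ w) (hq' : q + r ≤ w) :
    u ≤ p + t * (q - p) ∧ p + t * (q - p) + r ≤ w := by
  constructor <;> nlinarith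

set_option maxHeartbeats 1000000 in
/-- **Approximation on a ring.**  If all cubes contained in `Q \ Q'` admit an `η`-approximation,
where `Q'` is a subcube of at most half the side of `Q` whose distance to each face of `Q` is `0` or
at least its side, then a single polynomial is within `39 C η` of `f` on all of `Q \ Q'`.

A point `z` of the ring lies in a cube of the ring whose side is comparable to the widest slab
containing `z`; since `d ≥ 2`, that cube can be slid inside the slab, in another direction `j`, into
a wide slab orthogonal to direction `j`, then enlarged to side `L / 4`, then slid to a fixed corner
cube. -/
lemma ring_approx {d k : ℕ} (hd : 2 ≤ d) {C : ℝ} (hC : RemezConst d k C)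
    {f : (Fin d → ℝ) → ℝ} {η : ℝ} (hη : 0 ≤ η) {x a : Fin d → ℝ} {l L : ℝ} (hl : 0 < l)
    (hlL : 2 * l ≤ L) (hxa : ∀ i, x i ≤ a i) (hax : ∀ i, a i + l ≤ x i + L)
    (hgap : ∀ i, a i = x i ∨ l ≤ a i - x i)
    (hgap' : ∀ i, a i + l = x i + L ∨ l ≤ x i + L - (a i + l))
    (hgood : ∀ (y : Fin d → ℝ) (r : ℝ), 0 < r → (∀ m, x m ≤ y m ∧ y m + r ≤ x m + L) →
      (∃ i b, slabLo x a l i b ≤ y i ∧ y i + r ≤ slabHi x a L i b) →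
      Approx d k f η (cubeAt y r)) :
    Approx d k f (39 * C * η) (cubeAt x L \ cubeAt a l) := by
  have hL : 0 < L := by linarith
  have hlo : ∀ i b, x i ≤ slabLo x a l i b := by
    intro i b
    have := hxa i
    cases b <;> simp only [slabLo, if_true, if_false, Bool.false_eq_true] <;> linarith
  have hhi : ∀ i b, slabHi x a L i b ≤ x i + L := by
    intro i b
    have := hax i
    cases b <;> simp only [slabHi, if_true, if_false, Bool.false_eq_true] <;> linarith
  have hgl : ∀ i b, slabLo x a l i b < slabHi x a L i b →
      l ≤ slabHi x a L i b - slabLo x a l i b := by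
    intro i b h
    cases b <;> simp only [slabHi, slabLo, if_true, if_false, Bool.false_eq_true] at h ⊢
    · rcases hgap i with h' | h' <;> linarith
    · rcases hgap' i with h' | h' <;> linarith
  have hbig : ∀ i, ∃ b, L / 4 ≤ slabHi x a L i b - slabLo x a l i b := by
    intro i
    by_cases h : L / 4 ≤ a i - x i
    · exact ⟨false, by simpa [slabHi, slabLo] using h⟩
    · refine ⟨true, ?_⟩
      simp only [slabHi, slabLo, if_true]
      linarith
  choose σ hσ using hbig
  -- the corner cube, contained in every wide slab
  set yc : Fin d → ℝ := fun i => slabLo x a l i (σ i) with hyc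
  have hycQ : ∀ m, x m ≤ yc m ∧ yc m + L / 4 ≤ x m + L := fun m =>
    ⟨hlo m _, by have := hσ m; have := hhi m (σ m); simp only [hyc]; linarith⟩
  obtain ⟨mc, hmc, hfc⟩ := hgood yc (L / 4) (by linarith) hycQ
    ⟨⟨0, by omega⟩, σ _, le_rfl, by have := hσ ⟨0, by omega⟩; simp only [hyc]; linarith⟩
  refine ⟨mc, hmc, ?_⟩
  rintro z ⟨hzQ, hzQ'⟩
  rw [mem_cubeAt] at hzQ hzQ'
  -- a slab containing `z`, of maximal width
  obtain ⟨⟨i, b⟩, hib, hmax⟩ : ∃ ib : Fin d × Bool,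
      (slabLo x a l ib.1 ib.2 ≤ z ib.1 ∧ z ib.1 < slabHi x a L ib.1 ib.2) ∧
      ∀ jc : Fin d × Bool, (slabLo x a l jc.1 jc.2 ≤ z jc.1 ∧ z jc.1 < slabHi x a L jc.1 jc.2) →
        slabHi x a L jc.1 jc.2 - slabLo x a l jc.1 jc.2 ≤
          slabHi x a L ib.1 ib.2 - slabLo x a l ib.1 ib.2 := by
    classical
    have hne : (Finset.univ.filter fun ib : Fin d × Bool =>
        slabLo x a l ib.1 ib.2 ≤ z ib.1 ∧ z ib.1 < slabHi x a L ib.1 ib.2).Nonempty := by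
      push Not at hzQ'
      obtain ⟨i, hi⟩ := hzQ'
      by_cases h : a i ≤ z i
      · exact ⟨(i, true), Finset.mem_filter.2 ⟨Finset.mem_univ _,
          by simpa [slabLo, slabHi] using And.intro (hi h) (hzQ i).2⟩⟩
      · exact ⟨(i, false), Finset.mem_filter.2 ⟨Finset.mem_univ _,
          by simpa [slabLo, slabHi] using And.intro (hzQ i).1 (not_le.1 h)⟩⟩
    obtain ⟨ib, h1, h2⟩ := Finset.exists_max_image _
      (fun ib : Fin d × Bool => slabHi x a L ib.1 ib.2 - slabLo x a l ib.1 ib.2) hne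
    refine ⟨ib, (Finset.mem_filter.1 h1).2, fun jc hjc => h2 jc ?_⟩
    exact Finset.mem_filter.2 ⟨Finset.mem_univ _, hjc⟩
  simp only at hib hmax
  set g := slabHi x a L i b - slabLo x a l i b with hg
  have hgl' : l ≤ g := hgl i b (by linarith)
  set r := min g (L / 4) with hr
  have hr0 : 0 < r := lt_min (by linarith) (by linarith)
  have hrL : r ≤ L / 4 := min_le_right _ _
  have hrg : r ≤ g := min_le_left _ _
  have : Nontrivial (Fin d) := Fin.nontrivial_iff_two_le.2 hd
  obtain ⟨j, hji⟩ := exists_ne i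
  -- a cube of side `r` in the slab `(i, b)` containing `z`
  set y : Fin d → ℝ := fun m => min (z m) ((if m = i then slabHi x a L i b else x m + L) - r)
    with hy
  have hyi : y i = min (z i) (slabHi x a L i b - r) := by simp [hy]
  have hyQ : ∀ m, x m ≤ y m ∧ y m + r ≤ x m + L := by
    intro m
    by_cases hm : m = i
    · subst hm
      rw [hyi]
      have h1 := hlo m b
      have h2 := hhi m b
      have h3 := min_le_right (z m) (slabHi x a L m b - r)
      exact ⟨le_min (by linarith) (by linarith), by linarith⟩
    · have e : y m = min (z m) (x m + L - r) := by simp [hy, hm]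
      rw [e]
      have h3 := min_le_right (z m) (x m + L - r)
      exact ⟨le_min (hzQ m).1 (by linarith), by linarith⟩
  have hyS : slabLo x a l i b ≤ y i ∧ y i + r ≤ slabHi x a L i b := by
    rw [hyi]
    have h3 := min_le_right (z i) (slabHi x a L i b - r)
    exact ⟨le_min hib.1 (by linarith), by linarith⟩
  have hyz : ∀ m, y m ≤ z m ∧ z m < y m + r := by
    intro m
    refine ⟨min_le_left _ _, ?_⟩
    simp only [hy]
    rw [← sub_lt_iff_lt_add, lt_min_iff]
    refine ⟨by linarith, ?_⟩
    split_ifs with h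
    · subst h; linarith [hib.2]
    · linarith [(hzQ m).2]
  -- its translate in direction `j` into the wide slab `(j, σ j)`
  set y' : Fin d → ℝ := Function.update y j
    (max (slabLo x a l j (σ j)) (min (y j) (slabHi x a L j (σ j) - r))) with hy'
  have hy'j : y' j = max (slabLo x a l j (σ j)) (min (y j) (slabHi x a L j (σ j) - r)) := by
    simp [hy']
  have hy'm : ∀ m, m ≠ j → y' m = y m := fun m hm => by simp [hy', hm]
  have hσj := hσ j
  have hy'S : slabLo x a l j (σ j) ≤ y' j ∧ y' j + r ≤ slabHi x a L j (σ j) := by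
    rw [hy'j]
    refine ⟨le_max_left _ _, ?_⟩
    rw [← le_sub_iff_add_le]
    exact max_le (by linarith) (min_le_right _ _)
  have hy'Q : ∀ m, x m ≤ y' m ∧ y' m + r ≤ x m + L := by
    intro m
    by_cases hm : m = j
    · subst hm
      exact ⟨(hlo m (σ m)).trans hy'S.1, hy'S.2.trans (hhi m (σ m))⟩
    · rw [hy'm m hm]; exact hyQ m
  have hdist : ∀ m, |y' m - y m| ≤ 4 * r := by
    intro m
    by_cases hm : m = j
    · subst hm
      rw [hy'j]
      refine slide_dist (z := z m) (σ m) hr0 hrL (hyQ m).1 (hyQ m).2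
        (hyz m).1 (hyz m).2 hσj ?_
      rcases le_total g (L / 4) with h | h
      · right
        have e : r = g := min_eq_left h
        rw [e]
        refine ⟨hgl', fun h' => ?_, fun h' => ?_⟩
        · simpa [slabLo, slabHi] using hmax (m, false) (by
            simpa [slabLo, slabHi] using ⟨(hzQ m).1, h'⟩)
        · simpa [slabLo, slabHi] using hmax (m, true) (by
            simpa [slabLo, slabHi] using ⟨h', (hzQ m).2⟩)
      · exact Or.inl (min_eq_right h)
    · rw [hy'm m hm, sub_self, abs_zero]; linarith
  -- a cube of side `L / 4` in the slab `(j, σ j)` containing the translate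
  set y'' : Fin d → ℝ := fun m =>
    min (y' m) ((if m = j then slabHi x a L j (σ j) else x m + L) - L / 4) with hy''
  have hy''Q : ∀ m, x m ≤ y'' m ∧ y'' m + L / 4 ≤ x m + L := by
    intro m
    by_cases hm : m = j
    · subst hm
      have e : y'' m = min (y' m) (slabHi x a L m (σ m) - L / 4) := by simp [hy'']
      rw [e]
      have h1 := hlo m (σ m)
      have h2 := hhi m (σ m)
      have h3 := min_le_right (y' m) (slabHi x a L m (σ m) - L / 4)
      exact ⟨le_min (hy'Q m).1 (by linarith), by linarith⟩
    · have e : y'' m = min (y' m) (x m + L - L / 4) := by simp [hy'', hm]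
      rw [e]
      have h3 := min_le_right (y' m) (x m + L - L / 4)
      exact ⟨le_min (hy'Q m).1 (by linarith), by linarith⟩
  have hy''S : slabLo x a l j (σ j) ≤ y'' j ∧ y'' j + L / 4 ≤ slabHi x a L j (σ j) := by
    have e : y'' j = min (y' j) (slabHi x a L j (σ j) - L / 4) := by simp [hy'']
    rw [e]
    have h3 := min_le_right (y' j) (slabHi x a L j (σ j) - L / 4)
    exact ⟨le_min hy'S.1 (by linarith), by linarith⟩
  have hsub : cubeAt y' r ⊆ cubeAt y'' (L / 4) := by
    intro v hv
    rw [mem_cubeAt] at hv ⊢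
    intro m
    refine ⟨(min_le_left _ _).trans (hv m).1, ?_⟩
    simp only [hy'']
    rw [← sub_lt_iff_lt_add, lt_min_iff]
    have := hv m
    refine ⟨by linarith, ?_⟩
    split_ifs with h
    · subst h; linarith [hy'S.2]
    · linarith [(hy'Q m).2]
  obtain ⟨m₀, hm₀, hf₀⟩ := hgood y r hr0 hyQ ⟨i, b, hyS⟩
  obtain ⟨m₁, hm₁, hf₁⟩ := hgood y' r hr0 hy'Q ⟨j, σ j, hy'S⟩
  obtain ⟨m₂, hm₂, hf₂⟩ := hgood y'' (L / 4) (by linarith) hy''Q ⟨j, σ j, hy''S⟩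
  have e0 : |f z - MvPolynomial.eval z m₀| ≤ η := hf₀ z (mem_cubeAt.2 hyz)
  have e1 : |MvPolynomial.eval z m₀ - MvPolynomial.eval z m₁| ≤ 18 * C * η := by
    refine hC.translate hη hr0 ?_ hdist hm₀ hm₁ hf₀ hf₁ ?_
    · intro t ht0 ht1
      refine hgood _ r hr0 ?_ ⟨i, b, ?_⟩
      · intro m
        have h1 := hyQ m
        have h2 := hy'Q m
        exact segment_mem ht0 ht1 h1.1 h2.1 h1.2 h2.2
      · simp only [hy'm i hji.symm, sub_self, mul_zero, add_zero]
        exact hyS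
    · intro m
      have := hyz m
      rw [abs_le]; constructor <;> linarith
  have e2 : |MvPolynomial.eval z m₁ - MvPolynomial.eval z m₂| ≤ 2 * C * η := by
    refine hC.diff_le (f := f) hη hr0 hm₁ hm₂ hf₁ (fun v hv => hf₂ v (hsub hv)) ?_
    intro m
    have := hyz m
    have h2 := abs_le.1 (hdist m)
    rw [abs_le]; constructor <;> linarith
  have e3 : |MvPolynomial.eval z m₂ - MvPolynomial.eval z mc| ≤ 18 * C * η := by
    refine hC.translate (f := f) hη (by linarith : 0 < L / 4) ?_ ?_ hm₂ hmc hf₂ hfc ?_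
    · intro t ht0 ht1
      refine hgood _ _ (by linarith) ?_ ⟨j, σ j, ?_⟩
      · intro m
        have h1 := hy''Q m
        have h2 := hycQ m
        exact segment_mem ht0 ht1 h1.1 h2.1 h1.2 h2.2
      · have h2 : slabLo x a l j (σ j) ≤ yc j ∧ yc j + L / 4 ≤ slabHi x a L j (σ j) :=
          ⟨le_rfl, by simp only [hyc]; linarith⟩
        exact segment_mem ht0 ht1 hy''S.1 h2.1 hy''S.2 h2.2
    · intro m
      have h1 := hy''Q m
      have h2 := hycQ m
      rw [abs_le]; constructor <;> linarith
    · intro m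
      have h1 := hy''Q m
      have h2 := hzQ m
      rw [abs_le]; constructor <;> linarith
  have hCη : η ≤ C * η := by nlinarith [hC.1]
  have t1 := abs_sub_le (f z) (MvPolynomial.eval z m₀) (MvPolynomial.eval z mc)
  have t2 := abs_sub_le (MvPolynomial.eval z m₀) (MvPolynomial.eval z m₁)
    (MvPolynomial.eval z mc)
  have t3 := abs_sub_le (MvPolynomial.eval z m₁) (MvPolynomial.eval z m₂)
    (MvPolynomial.eval z mc)
  linarith

/-! ### Dyadic cubes -/

/-- The dyadic cube `2^{-j}(α + [0,1)^d)`. -/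
def dyadic {d : ℕ} (j : ℕ) (α : Fin d → ℕ) : Set (Fin d → ℝ) :=
  Set.univ.pi fun i => Set.Ico ((α i : ℝ) / 2 ^ j) (((α i : ℝ) + 1) / 2 ^ j)

/-- The index of the child of `dyadic j α` selected by `ε`. -/
def childIdx {d : ℕ} (α : Fin d → ℕ) (ε : Fin d → Fin 2) : Fin d → ℕ :=
  fun i => 2 * α i + ε i

lemma mem_dyadic {d j : ℕ} {α : Fin d → ℕ} {x : Fin d → ℝ} :
    x ∈ dyadic j α ↔ ∀ i, (α i : ℝ) ≤ x i * 2 ^ j ∧ x i * 2 ^ j < α i + 1 := by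
  simp only [dyadic, Set.mem_pi, Set.mem_univ, true_imp_iff, Set.mem_Ico]
  refine forall_congr' fun i => ?_
  rw [div_le_iff₀ (by positivity), lt_div_iff₀ (by positivity)]

lemma dyadic_eq_cubeAt {d : ℕ} (j : ℕ) (α : Fin d → ℕ) :
    dyadic j α = cubeAt (fun i => (α i : ℝ) / 2 ^ j) (1 / 2 ^ j) := by
  simp only [dyadic, cubeAt, add_div]

lemma isCube_cubeAt {d : ℕ} (y : Fin d → ℝ) {r : ℝ} (hr : 0 < r) : IsCube d (cubeAt y r) :=
  ⟨y, r, hr, rfl⟩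

lemma isCube_dyadic {d : ℕ} (j : ℕ) (α : Fin d → ℕ) : IsCube d (dyadic j α) := by
  rw [dyadic_eq_cubeAt]; exact isCube_cubeAt _ (by positivity)

lemma IsCube.nonempty {d : ℕ} {Q : Set (Fin d → ℝ)} (h : IsCube d Q) : Q.Nonempty := by
  obtain ⟨x, l, hl, rfl⟩ := h
  exact ⟨x, fun i _ => ⟨le_rfl, by linarith⟩⟩

lemma isDyadicCube_dyadic {d j : ℕ} {α : Fin d → ℕ} (h : ∀ i, α i < 2 ^ j) :
    IsDyadicCube d (dyadic j α) := ⟨j, α, h, rfl⟩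

lemma IsDyadicCube.subset_unitCube {d : ℕ} {Q : Set (Fin d → ℝ)} (h : IsDyadicCube d Q) :
    Q ⊆ unitCube d := by
  obtain ⟨j, α, hα, rfl⟩ := h
  intro x hx i _
  have := (mem_dyadic (d := d) (j := j) (α := α)).1 hx i
  have h2 : (0 : ℝ) < 2 ^ j := by positivity
  have h3 : ((α i : ℝ) + 1) ≤ 2 ^ j := by exact_mod_cast hα i
  constructor
  · by_contra h
    have := (α i).cast_nonneg (α := ℝ)
    nlinarith
  · by_contra h
    nlinarith

lemma dyadic_zero {d : ℕ} : dyadic 0 (fun _ : Fin d => 0) = unitCube d := by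
  simp [dyadic, unitCube]

lemma dyadic_disjoint {d j : ℕ} {α β : Fin d → ℕ} (h : α ≠ β) :
    Disjoint (dyadic j α) (dyadic j β) := by
  rw [Set.disjoint_left]
  intro x hx hy
  apply h
  ext i
  have h1 := mem_dyadic.1 hx i
  have h2 := mem_dyadic.1 hy i
  have a : (α i : ℝ) < β i + 1 := by linarith
  have b : (β i : ℝ) < α i + 1 := by linarith
  have a : α i < β i + 1 := by exact_mod_cast a
  have b : β i < α i + 1 := by exact_mod_cast b
  omega

lemma childIdx_injective {d : ℕ} (α : Fin d → ℕ) : Function.Injective (childIdx α) := by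
  intro ε ε' h
  ext i
  have := congrFun h i
  simp only [childIdx] at this
  omega

lemma childIdx_lt {d j : ℕ} {α : Fin d → ℕ} (h : ∀ i, α i < 2 ^ j) (ε : Fin d → Fin 2) (i : Fin d) :
    childIdx α ε i < 2 ^ (j + 1) := by
  have := h i
  have := (ε i).2
  simp only [childIdx, pow_succ]
  omega

lemma dyadic_childIdx_subset {d j : ℕ} (α : Fin d → ℕ) (ε : Fin d → Fin 2) :
    dyadic (j + 1) (childIdx α ε) ⊆ dyadic j α := by
  intro x hx
  rw [mem_dyadic] at hx ⊢
  intro i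
  have h := hx i
  have h1 : ((ε i : ℕ) : ℝ) ≤ 1 := by exact_mod_cast Nat.lt_succ_iff.1 (ε i).2
  have h0 : (0 : ℝ) ≤ ((ε i : ℕ) : ℝ) := by positivity
  simp only [childIdx, pow_succ] at h
  push_cast at h
  constructor <;> linarith

lemma exists_mem_child {d j : ℕ} {α : Fin d → ℕ} {x : Fin d → ℝ} (hx : x ∈ dyadic j α) :
    ∃ ε, x ∈ dyadic (j + 1) (childIdx α ε) := by
  refine ⟨fun i => if x i * 2 ^ (j + 1) < 2 * α i + 1 then 0 else 1, ?_⟩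
  rw [mem_dyadic] at hx ⊢
  intro i
  have h := hx i
  simp only [childIdx, pow_succ]
  split_ifs with h1
  · push_cast
    simp only [Fin.val_zero, Nat.cast_zero]
    constructor <;> linarith
  · push_cast
    simp only [Fin.val_one, Nat.cast_one]
    constructor <;> linarith

lemma dyadic_sub_subset {d j e : ℕ} (α β : Fin d → ℕ) (hβ : ∀ i, β i < 2 ^ e) :
    dyadic (j + e) (fun i => 2 ^ e * α i + β i) ⊆ dyadic j α := by
  intro x hx
  rw [mem_dyadic] at hx ⊢
  intro i
  have h := hx i
  have h1 : (β i : ℝ) + 1 ≤ 2 ^ e := by exact_mod_cast hβ i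
  have h0 : (0 : ℝ) ≤ β i := by positivity
  have h2 : (0 : ℝ) < 2 ^ e := by positivity
  rw [pow_add] at h
  push_cast at h
  constructor
  · by_contra hh
    nlinarith
  · by_contra hh
    nlinarith

lemma Approx.mono {d k : ℕ} {f : (Fin d → ℝ) → ℝ} {η : ℝ} {S T : Set (Fin d → ℝ)}
    (h : Approx d k f η T) (hST : S ⊆ T) : Approx d k f η S := by
  obtain ⟨m, hm, hf⟩ := h
  exact ⟨m, hm, fun x hx => hf x (hST hx)⟩

/-- `ring_approx` for a dyadic cube minus a dyadic subcube. -/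
lemma ring_approx_dyadic {d k : ℕ} (hd : 2 ≤ d) {C : ℝ} (hC : RemezConst d k C)
    {f : (Fin d → ℝ) → ℝ} {η : ℝ} (hη : 0 ≤ η) {j e : ℕ} {α β : Fin d → ℕ}
    (hβ : ∀ i, β i < 2 ^ e)
    (hgood : ∀ K, IsCube d K →
      K ⊆ dyadic j α \ dyadic (j + e) (fun i => 2 ^ e * α i + β i) → Approx d k f η K) :
    Approx d k f (39 * C * η)
      (dyadic j α \ dyadic (j + e) (fun i => 2 ^ e * α i + β i)) := by
  rcases Nat.eq_zero_or_pos e with rfl | he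
  · have : β = 0 := by ext i; have := hβ i; simp at this; simpa using this
    subst this
    refine ⟨0, by simp, fun x hx => ?_⟩
    simp at hx
  have hj : (0 : ℝ) < 2 ^ j := by positivity
  have he2 : (2 : ℝ) ≤ 2 ^ e := by
    calc (2 : ℝ) = 2 ^ 1 := by norm_num
      _ ≤ 2 ^ e := pow_le_pow_right₀ (by norm_num) he
  -- everything is measured in units of the small side `l`
  set l : ℝ := 1 / 2 ^ (j + e) with hl
  have hl0 : 0 < l := by positivity
  have hL : (1 : ℝ) / 2 ^ j = 2 ^ e * l := by rw [hl, pow_add]; field_simp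
  have hx : ∀ i, (α i : ℝ) / 2 ^ j = 2 ^ e * l * α i := by intro i; rw [← hL]; ring
  have ha : ∀ i, ((2 ^ e * α i + β i : ℕ) : ℝ) / 2 ^ (j + e) = 2 ^ e * l * α i + l * β i := by
    intro i; rw [hl]; push_cast; field_simp
  have hβ1 : ∀ i, (β i : ℝ) + 1 ≤ 2 ^ e := fun i => by exact_mod_cast hβ i
  have hβ0 : ∀ i, (0 : ℝ) ≤ β i := fun i => by positivity
  rw [dyadic_eq_cubeAt, dyadic_eq_cubeAt] at hgood ⊢
  rw [← hl] at hgood ⊢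
  refine ring_approx hd hC hη hl0 ?_ ?_ ?_ ?_ ?_ ?_
  · rw [hL]; nlinarith
  · intro i; rw [hx, ha]; nlinarith [hβ0 i]
  · intro i; rw [hx, ha, hL]; nlinarith [hβ1 i]
  · intro i
    rw [hx, ha]
    rcases Nat.eq_zero_or_pos (β i) with h | h
    · left; rw [h]; simp
    · right
      have : (1 : ℝ) ≤ β i := by exact_mod_cast h
      nlinarith
  · intro i
    rw [hx, ha, hL]
    rcases (Nat.succ_le_of_lt (hβ i)).eq_or_lt with h | h
    · left
      have : (β i : ℝ) + 1 = 2 ^ e := by exact_mod_cast h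
      rw [← this]; ring
    · right
      have : (β i : ℝ) + 1 + 1 ≤ 2 ^ e := by exact_mod_cast h
      nlinarith
  · rintro y r hr hy ⟨i, b, hib⟩
    refine hgood _ (isCube_cubeAt y hr) ?_
    intro v hv
    rw [mem_cubeAt] at hv
    refine ⟨mem_cubeAt.2 fun m => ⟨(hy m).1.trans (hv m).1, (hv m).2.trans_le (hy m).2⟩, ?_⟩
    intro hv'
    have h1 := mem_cubeAt.1 hv' i
    have h2 := hv i
    cases b <;> simp only [slabLo, slabHi, if_true, if_false, Bool.false_eq_true] at hib <;>
      linarith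

/-! ### Piecewise polynomials with few pieces -/

/-- `g` is a piecewise polynomial of degree `k - 1` over at most `n` dyadic cubes, which may overlap
and need not cover the unit cube.  The polynomials are normalised to vanish off the family, so that
two such representations can be added over the union of their families. -/
def HasPieces (d k n : ℕ) (g : (Fin d → ℝ) → ℝ) : Prop :=
  ∃ (Δ : Finset (Set (Fin d → ℝ))) (P : Set (Fin d → ℝ) → MvPolynomial (Fin d) ℝ),
    Δ.card ≤ n ∧ (∀ Q ∈ Δ, IsDyadicCube d Q) ∧ (∀ Q, (P Q).totalDegree ≤ k - 1) ∧
    (∀ Q, Q ∉ Δ → P Q = 0) ∧ ∀ x, g x = piecewisePoly d Δ P x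

lemma piecewisePoly_of_subset {d : ℕ} {Δ Δ' : Finset (Set (Fin d → ℝ))} (h : Δ ⊆ Δ')
    {P : Set (Fin d → ℝ) → MvPolynomial (Fin d) ℝ} (hP : ∀ Q, Q ∉ Δ → P Q = 0)
    (x : Fin d → ℝ) : piecewisePoly d Δ P x = piecewisePoly d Δ' P x := by
  unfold piecewisePoly
  refine Finset.sum_subset h fun Q _ hQ => ?_
  simp [hP Q hQ]

lemma HasPieces.add {d k n m : ℕ} {g h : (Fin d → ℝ) → ℝ} (hg : HasPieces d k n g)
    (hh : HasPieces d k m h) :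
    HasPieces d k (n + m) (fun x => g x + h x) := by
  classical
  obtain ⟨Δ, P, h1, h2, h3, h4, h5⟩ := hg
  obtain ⟨Δ', P', h1', h2', h3', h4', h5'⟩ := hh
  refine ⟨Δ ∪ Δ', fun Q => P Q + P' Q, (Finset.card_union_le _ _).trans (by omega), ?_, ?_, ?_, ?_⟩
  · intro Q hQ
    rcases Finset.mem_union.1 hQ with h | h
    · exact h2 Q h
    · exact h2' Q h
  · intro Q
    exact (MvPolynomial.totalDegree_add _ _).trans (max_le (h3 Q) (h3' Q))
  · intro Q hQ
    rw [Finset.mem_union, not_or] at hQ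
    simp [h4 Q hQ.1, h4' Q hQ.2]
  · intro x
    dsimp only
    rw [h5, h5', piecewisePoly_of_subset Finset.subset_union_left h4,
      piecewisePoly_of_subset Finset.subset_union_right h4']
    simp only [piecewisePoly, map_add]
    rw [← Finset.sum_add_distrib]
    refine Finset.sum_congr rfl fun Q _ => ?_
    by_cases hx : x ∈ Q <;> simp [hx]

lemma HasPieces.sum {d k : ℕ} {ι : Type*} (s : Finset ι) {n : ι → ℕ} {g : ι → (Fin d → ℝ) → ℝ}
    (h : ∀ i, HasPieces d k (n i) (g i)) : HasPieces d k (∑ i ∈ s, n i) (fun x => ∑ i ∈ s, g i x) := by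
  classical
  induction s using Finset.induction_on with
  | empty => exact ⟨∅, fun _ => 0, by simp, by simp, by simp, by simp, by simp [piecewisePoly]⟩
  | insert a s ha ih =>
    simp only [Finset.sum_insert ha]
    exact (h a).add ih

lemma HasPieces.single {d k : ℕ} {Q : Set (Fin d → ℝ)} (hQ : IsDyadicCube d Q)
    {m : MvPolynomial (Fin d) ℝ} (hm : m.totalDegree ≤ k - 1) :
    HasPieces d k 1 (Q.indicator fun y => MvPolynomial.eval y m) := by
  classical
  refine ⟨{Q}, fun R => if R = Q then m else 0, by simp, by simpa using hQ, ?_, ?_, ?_⟩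
  · intro R
    dsimp only
    split_ifs
    · exact hm
    · simp
  · intro R hR
    simp at hR
    simp [hR]
  · intro x; simp [piecewisePoly]

/-! ### The decomposition -/

/-- A finite pairwise disjoint family of bad cubes contained in `S`, i.e. of cubes on which `f` has
no `η`-approximation. -/
def BadFamily (d k : ℕ) (f : (Fin d → ℝ) → ℝ) (η : ℝ) (S : Set (Fin d → ℝ))
    (F : Finset (Set (Fin d → ℝ))) : Prop :=
  (∀ K ∈ F, IsCube d K ∧ K ⊆ S ∧ ¬ Approx d k f η K) ∧
    (F : Set (Set (Fin d → ℝ))).PairwiseDisjoint id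

lemma BadFamily.mono {d k : ℕ} {f : (Fin d → ℝ) → ℝ} {η : ℝ} {S T : Set (Fin d → ℝ)}
    {F : Finset (Set (Fin d → ℝ))} (h : BadFamily d k f η S F) (hST : S ⊆ T) :
    BadFamily d k f η T F :=
  ⟨fun K hK => ⟨(h.1 K hK).1, (h.1 K hK).2.1.trans hST, (h.1 K hK).2.2⟩, h.2⟩

lemma BadFamily.insert {d k : ℕ} {f : (Fin d → ℝ) → ℝ} {η : ℝ} {S : Set (Fin d → ℝ)}
    {F : Finset (Set (Fin d → ℝ))} (h : BadFamily d k f η S F) {K : Set (Fin d → ℝ)}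
    (hK : IsCube d K) (hKb : ¬ Approx d k f η K) (hKS : Disjoint K S) :
    ∃ F', BadFamily d k f η (K ∪ S) F' ∧ F'.card = F.card + 1 := by
  classical
  refine ⟨Insert.insert K F, ⟨?_, ?_⟩, ?_⟩
  · intro R hR
    rcases Finset.mem_insert.1 hR with rfl | hR
    · exact ⟨hK, Set.subset_union_left, hKb⟩
    · have := h.1 R hR
      exact ⟨this.1, this.2.1.trans Set.subset_union_right, this.2.2⟩
  · rw [Finset.coe_insert]
    refine h.2.insert fun R hR _ => ?_
    exact hKS.mono_right (h.1 R hR).2.1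
  · refine Finset.card_insert_of_notMem fun hKF => ?_
    obtain ⟨x, hx⟩ := hK.nonempty
    exact Set.disjoint_left.1 hKS hx ((h.1 K hKF).2.1 hx)

lemma BadFamily.biUnion {d k : ℕ} {f : (Fin d → ℝ) → ℝ} {η : ℝ} {ι : Type*} (T : Finset ι)
    {S : ι → Set (Fin d → ℝ)} {F : ι → Finset (Set (Fin d → ℝ))}
    (h : ∀ i, BadFamily d k f η (S i) (F i)) (hS : Pairwise (Function.onFun Disjoint S)) :
    ∃ F', BadFamily d k f η (⋃ i, S i) F' ∧ F'.card = ∑ i ∈ T, (F i).card := by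
  classical
  refine ⟨T.biUnion F, ⟨?_, ?_⟩, Finset.card_biUnion ?_⟩
  · intro K hK
    obtain ⟨i, _, hKi⟩ := Finset.mem_biUnion.1 hK
    have := (h i).1 K hKi
    exact ⟨this.1, this.2.1.trans (Set.subset_iUnion S i), this.2.2⟩
  · intro K hK K' hK' hne
    obtain ⟨i, _, hKi⟩ := Finset.mem_biUnion.1 hK
    obtain ⟨i', _, hKi'⟩ := Finset.mem_biUnion.1 hK'
    by_cases hii : i = i'
    · subst hii
      exact (h i).2 hKi hKi' hne
    · exact (hS hii).mono ((h i).1 K hKi).2.1 ((h i').1 K' hKi').2.1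
  · intro i _ i' _ hii
    refine Finset.disjoint_left.2 ?_
    intro K hKi hKi'
    obtain ⟨x, hx⟩ := ((h i).1 K hKi).1.nonempty
    exact Set.disjoint_left.1 (hS hii) (((h i).1 K hKi).2.1 hx) (((h i').1 K hKi').2.1 hx)

/-- Bookkeeping for the inductive step: the children `ε` with more than one piece form a set `T`;
the pieces of all children together are controlled by the bad cubes of the children in `T`. -/
lemma sum_pieces_le {ι : Type*} [Fintype ι] {A B : ℕ} {n c : ι → ℕ}
    (h : ∀ i, n i ≤ 1 ∨ n i + B ≤ A * c i) :
    ∑ i, n i + B * (Finset.univ.filter fun i => ¬ n i ≤ 1).card ≤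
      A * ∑ i ∈ Finset.univ.filter (fun i => ¬ n i ≤ 1), c i + Fintype.card ι := by
  classical
  rw [← Finset.sum_filter_add_sum_filter_not Finset.univ (fun i => ¬ n i ≤ 1) n]
  have h1 : ∑ i ∈ Finset.univ.filter (fun i => ¬ ¬ n i ≤ 1), n i ≤ Fintype.card ι := by
    calc _ ≤ ∑ i ∈ Finset.univ.filter (fun i => ¬ ¬ n i ≤ 1), 1 :=
          Finset.sum_le_sum fun i hi => by simpa using hi
      _ ≤ _ := by rw [Finset.sum_const, smul_eq_mul, mul_one]; exact Finset.card_le_univ _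
  have h2 : ∑ i ∈ Finset.univ.filter (fun i => ¬ n i ≤ 1), (n i + B) ≤
      ∑ i ∈ Finset.univ.filter (fun i => ¬ n i ≤ 1), A * c i :=
    Finset.sum_le_sum fun i hi => (h i).resolve_left (Finset.mem_filter.1 hi).2
  rw [Finset.sum_add_distrib, Finset.sum_const, smul_eq_mul, ← Finset.mul_sum] at h2
  rw [mul_comm B]
  omega

set_option maxHeartbeats 1000000 in
/-- **The decomposition.**  Assume that all cubes of side at most `2^{-J}` are good.  Then on any
dyadic cube `Q` the function is within `39 C η` of a piecewise polynomial vanishing off `Q`, whose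
number of pieces is `1` or is linearly controlled by the size of a disjoint family of bad cubes
in `Q`.

If `Q` is bad, let `Q'` be a smallest dyadic subcube of `Q` containing a bad cube and such that
`Q \ Q'` contains none.  One polynomial suffices on `Q \ Q'`, and the children of `Q'` are treated
recursively.  If none of them needs more than one piece, a bad cube in `Q'` pays for the new pieces;
if at least two do, the slack `2 ^ d + 2` in their piece counts does; if exactly one does, minimality
of `Q'` yields a further bad cube outside that child, which does. -/
lemma decomposition {d k : ℕ} (hd : 2 ≤ d) {C : ℝ} (hC : RemezConst d k C)
    {f : (Fin d → ℝ) → ℝ} {η : ℝ} (hη : 0 ≤ η) (J : ℕ)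
    (hJ : ∀ (y : Fin d → ℝ) (r : ℝ), 0 < r → r ≤ 1 / 2 ^ J → cubeAt y r ⊆ unitCube d →
      Approx d k f η (cubeAt y r)) :
    ∀ (t j : ℕ) (α : Fin d → ℕ), (∀ i, α i < 2 ^ j) → J ≤ j + t →
      ∃ (g : (Fin d → ℝ) → ℝ) (n : ℕ) (F : Finset (Set (Fin d → ℝ))),
        HasPieces d k n g ∧ (∀ x, x ∉ dyadic j α → g x = 0) ∧
        (∀ x ∈ dyadic j α, |f x - g x| ≤ 39 * C * η) ∧
        BadFamily d k f η (dyadic j α) F ∧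
        (n ≤ 1 ∨ n + (2 ^ d + 2) ≤ (2 * 2 ^ d + 4) * F.card) := by
  classical
  have hηC : η ≤ 39 * C * η := by nlinarith [hC.1]
  have hfine : ∀ (j : ℕ) (α : Fin d → ℕ), (∀ i, α i < 2 ^ j) → J ≤ j →
      Approx d k f η (dyadic j α) := by
    intro j α hα hj
    rw [dyadic_eq_cubeAt]
    refine hJ _ _ (by positivity) ?_ ?_
    · exact one_div_le_one_div_of_le (by positivity) (pow_le_pow_right₀ (by norm_num) hj)
    · rw [← dyadic_eq_cubeAt]
      exact (isDyadicCube_dyadic hα).subset_unitCube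
  have hsimple : ∀ (j : ℕ) (α : Fin d → ℕ), (∀ i, α i < 2 ^ j) → Approx d k f η (dyadic j α) →
      ∃ (g : (Fin d → ℝ) → ℝ) (n : ℕ) (F : Finset (Set (Fin d → ℝ))),
        HasPieces d k n g ∧ (∀ x, x ∉ dyadic j α → g x = 0) ∧
        (∀ x ∈ dyadic j α, |f x - g x| ≤ 39 * C * η) ∧
        BadFamily d k f η (dyadic j α) F ∧
        (n ≤ 1 ∨ n + (2 ^ d + 2) ≤ (2 * 2 ^ d + 4) * F.card) := by
    rintro j α hα ⟨m, hm, hf⟩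
    refine ⟨_, 1, ∅, HasPieces.single (isDyadicCube_dyadic hα) hm, ?_, ?_, ?_, Or.inl le_rfl⟩
    · intro x hx; exact Set.indicator_of_notMem hx _
    · intro x hx; rw [Set.indicator_of_mem hx]; exact (hf x hx).trans hηC
    · exact ⟨by simp, by simp⟩
  intro t
  induction t with
  | zero => intro j α hα hj; exact hsimple j α hα (hfine j α hα hj)
  | succ t ih =>
    intro j α hα hjt
    by_cases hQ : Approx d k f η (dyadic j α)
    · exact hsimple j α hα hQ
    -- `E` is the set of relative depths of admissible subcubes `Q'`
    set E : Set ℕ := {e | ∃ β : Fin d → ℕ, (∀ i, β i < 2 ^ e) ∧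
      (∃ K, IsCube d K ∧ K ⊆ dyadic (j + e) (fun i => 2 ^ e * α i + β i) ∧ ¬ Approx d k f η K) ∧
      ∀ K, IsCube d K → K ⊆ dyadic j α \ dyadic (j + e) (fun i => 2 ^ e * α i + β i) →
        Approx d k f η K} with hE
    have hlt : ∀ (e : ℕ) (β : Fin d → ℕ), (∀ i, β i < 2 ^ e) →
        ∀ i, 2 ^ e * α i + β i < 2 ^ (j + e) := by
      intro e β hβ i
      have h1 := hβ i
      have h2 : α i + 1 ≤ 2 ^ j := hα i
      rw [pow_add, mul_comm (2 ^ j)]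
      calc 2 ^ e * α i + β i < 2 ^ e * (α i + 1) := by rw [mul_add, mul_one]; omega
        _ ≤ 2 ^ e * 2 ^ j := Nat.mul_le_mul_left _ h2
    have hE0 : (0 : ℕ) ∈ E := by
      refine ⟨fun _ => 0, by simp, ⟨dyadic j α, isCube_dyadic _ _, by simp, hQ⟩, ?_⟩
      intro K hK hKs
      obtain ⟨x, hx⟩ := hK.nonempty
      have := hKs hx
      simp at this
    have hEb : BddAbove E := by
      refine ⟨J, ?_⟩
      rintro e ⟨β, hβ, ⟨K, hK, hKs, hKb⟩, _⟩
      by_contra h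
      exact hKb ((hfine _ _ (hlt e β hβ) (by omega)).mono hKs)
    have hEmem := Nat.sSup_mem ⟨0, hE0⟩ hEb
    have hEmax : ∀ e ∈ E, e ≤ sSup E := fun e he => le_csSup hEb he
    set e := sSup E with he
    obtain ⟨β, hβ, ⟨K, hK, hKs, hKb⟩, hring⟩ := hEmem
    obtain ⟨m, hm, hfm⟩ := ring_approx_dyadic hd hC hη hβ hring
    set α' : Fin d → ℕ := fun i => 2 ^ e * α i + β i with hα'
    have hα'lt : ∀ i, α' i < 2 ^ (j + e) := hlt e β hβ
    have hsubQ : dyadic (j + e) α' ⊆ dyadic j α := dyadic_sub_subset α β hβ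
    have hstep := fun ε : Fin d → Fin 2 =>
      ih (j + e + 1) (childIdx α' ε) (childIdx_lt hα'lt ε) (by omega)
    choose g n F hg hg0 hgf hF hn using hstep
    have hchild : ∀ ε, dyadic (j + e + 1) (childIdx α' ε) ⊆ dyadic (j + e) α' :=
      fun ε => dyadic_childIdx_subset α' ε
    -- maximality of the depth of `Q'`
    have hmaxi : ∀ ε, (F ε).Nonempty → ∃ K, IsCube d K ∧
        K ⊆ dyadic j α \ dyadic (j + e + 1) (childIdx α' ε) ∧ ¬ Approx d k f η K := by
      intro ε ⟨K₀, hK₀⟩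
      by_contra! hcon
      have hmem : e + 1 ∈ E := by
        refine ⟨childIdx β ε, childIdx_lt hβ ε, ?_⟩
        have heq : (fun i => 2 ^ (e + 1) * α i + childIdx β ε i) = childIdx α' ε := by
          ext i; simp only [hα', childIdx]; ring
        rw [heq, ← add_assoc]
        exact ⟨⟨K₀, (hF ε).1 K₀ hK₀⟩, hcon⟩
      have := hEmax _ hmem
      omega
    set T := Finset.univ.filter fun ε => ¬ n ε ≤ 1 with hT
    have hcount := sum_pieces_le hn
    have hcard : Fintype.card (Fin d → Fin 2) = 2 ^ d := by simp
    rw [← hT, hcard] at hcount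
    have hdisj : Pairwise (Function.onFun Disjoint
        fun ε => dyadic (j + e + 1) (childIdx α' ε)) := fun ε ε' h =>
      dyadic_disjoint fun h' => h (childIdx_injective α' h')
    have hFex : ∃ F', BadFamily d k f η (dyadic j α) F' ∧
        (1 + 1 + ∑ ε, n ε) + (2 ^ d + 2) ≤ (2 * 2 ^ d + 4) * F'.card := by
      rcases Nat.lt_or_ge T.card 2 with hT2 | hT2
      · rcases Nat.lt_or_ge T.card 1 with hT1 | hT1
        · have hT0 : T = ∅ := Finset.card_eq_zero.1 (by omega)
          refine ⟨{K}, ⟨by simpa using ⟨hK, hKs.trans hsubQ, hKb⟩, by simp⟩, ?_⟩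
          rw [hT0] at hcount
          simp at hcount ⊢
          omega
        · obtain ⟨ε, hε⟩ := Finset.card_eq_one.1 (le_antisymm (by omega) hT1)
          have hεT : ¬ n ε ≤ 1 := by
            have : ε ∈ T := by rw [hε]; simp
            exact (Finset.mem_filter.1 this).2
          have hne : (F ε).Nonempty := by
            rw [← Finset.card_pos]
            by_contra h0
            have h0 : (F ε).card = 0 := by omega
            have := (hn ε).resolve_left hεT
            rw [h0] at this
            omega
          obtain ⟨K', hK', hK's, hK'b⟩ := hmaxi ε hne
          obtain ⟨F', hF', hF'c⟩ := (hF ε).insert hK' hK'b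
            (Set.disjoint_left.2 fun x hx => (hK's hx).2)
          refine ⟨F', hF'.mono (Set.union_subset (fun x hx => (hK's hx).1)
            ((hchild ε).trans hsubQ)), ?_⟩
          rw [hε] at hcount
          simp only [Finset.card_singleton, Finset.sum_singleton] at hcount
          rw [hF'c, mul_add]
          omega
      · obtain ⟨F', hF', hF'c⟩ := BadFamily.biUnion T hF hdisj
        refine ⟨F', hF'.mono (Set.iUnion_subset fun ε => (hchild ε).trans hsubQ), ?_⟩
        rw [hF'c]
        have : (2 ^ d + 2) * 2 ≤ (2 ^ d + 2) * T.card := Nat.mul_le_mul_left _ hT2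
        omega
    obtain ⟨F', hF', hF'c⟩ := hFex
    refine ⟨_, _, F', ((HasPieces.single (isDyadicCube_dyadic hα) hm).add
      (HasPieces.single (m := -m) (isDyadicCube_dyadic hα'lt)
        (by rwa [MvPolynomial.totalDegree_neg]))).add
      (HasPieces.sum Finset.univ hg), ?_, ?_, hF', Or.inr hF'c⟩
    · intro x hx
      have hx' : x ∉ dyadic (j + e) α' := fun h => hx (hsubQ h)
      rw [Set.indicator_of_notMem hx, Set.indicator_of_notMem hx',
        Finset.sum_eq_zero fun ε _ => hg0 ε x fun h => hx' (hchild ε h)]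
      simp
    · intro x hx
      by_cases hx' : x ∈ dyadic (j + e) α'
      · obtain ⟨ε, hε⟩ := exists_mem_child hx'
        rw [Set.indicator_of_mem hx, Set.indicator_of_mem hx',
          Finset.sum_eq_single ε (fun ε' _ hne => hg0 ε' x fun h =>
            Set.disjoint_left.1 (hdisj hne) h hε) (fun h => absurd (Finset.mem_univ _) h)]
        simpa using hgf ε x hε
      · rw [Set.indicator_of_mem hx, Set.indicator_of_notMem hx',
          Finset.sum_eq_zero fun ε _ => hg0 ε x fun h => hx' (hchild ε h)]
        simpa using hfm x ⟨hx, hx'⟩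

/-! ### From best approximations to pointwise approximation -/

lemma cubeAt_subset_closure_interior {d : ℕ} (y : Fin d → ℝ) {r : ℝ} (hr : 0 < r) :
    cubeAt y r ⊆ closure (interior (cubeAt y r)) := by
  unfold cubeAt
  rw [interior_pi_set Set.finite_univ, closure_pi_set]
  refine Set.pi_mono fun i _ => ?_
  rw [interior_Ico, closure_Ioo (by linarith)]
  exact Set.Ico_subset_Icc_self

/-- For continuous `f`, the essential supremum over a cube is a supremum, so a strict bound on
`E_k(f;K;L_∞)` gives a uniform polynomial approximation on `K`. -/
lemma approx_of_Ek_lt {d k : ℕ} {f : (Fin d → ℝ) → ℝ} {η : ℝ}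
    {K : Set (Fin d → ℝ)} (hK : IsCube d K) (hf : ContinuousOn f K)
    (h : Ek d k ⊤ f K < ENNReal.ofReal η) : Approx d k f η K := by
  simp only [Ek, iInf_lt_iff] at h
  obtain ⟨m, hm, hlt⟩ := h
  refine ⟨m, hm, ?_⟩
  obtain ⟨y, r, hr, rfl⟩ := hK
  have hη : 0 < η := ENNReal.ofReal_pos.1 (lt_of_le_of_lt zero_le hlt)
  have hc : ContinuousOn (fun x => |f x - MvPolynomial.eval x m|)
      (Set.univ.pi fun i => Set.Ico (y i) (y i + r)) :=
    (hf.sub (MvPolynomial.continuous_eval m).continuousOn).abs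
  rw [eLpNorm_exponent_top] at hlt
  have hae : (fun x => max |f x - MvPolynomial.eval x m| η)
      =ᵐ[volume.restrict (Set.univ.pi fun i => Set.Ico (y i) (y i + r))] fun _ => η := by
    filter_upwards [ae_le_eLpNormEssSup (f := fun x => f x - MvPolynomial.eval x m)
      (μ := volume.restrict (Set.univ.pi fun i => Set.Ico (y i) (y i + r)))] with x hx
    have h2 := hx.trans hlt.le
    rw [← ofReal_norm, ENNReal.ofReal_le_ofReal_iff hη.le, Real.norm_eq_abs] at h2
    exact max_eq_right h2
  have := Measure.eqOn_of_ae_eq hae (hc.sup continuousOn_const) continuousOn_const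
    (cubeAt_subset_closure_interior y hr)
  intro x hx
  exact max_eq_right_iff.1 (this hx)

/-- The polynomials of bounded degree form a finite-dimensional, hence closed, space of functions,
so arbitrarily good approximability gives exact equality. -/
lemma approx_zero {d k : ℕ} {f : (Fin d → ℝ) → ℝ} {S : Set (Fin d → ℝ)}
    (h : ∀ η : ℝ, 0 < η → Approx d k f η S) : Approx d k f 0 S := by
  let ev : MvPolynomial (Fin d) ℝ →ₗ[ℝ] (S → ℝ) :=
    { toFun := fun m x => MvPolynomial.eval x.1 m
      map_add' := fun a b => by ext x; simp
      map_smul' := fun c a => by ext x; simp }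
  let W := (MvPolynomial.restrictTotalDegree (Fin d) ℝ (k - 1)).map ev
  have hW : IsClosed (W : Set (S → ℝ)) := W.closed_of_finiteDimensional
  choose m hm hfm using fun n : ℕ => h (1 / (n + 1)) (by positivity)
  have hlim : Tendsto (fun n => ev (m n)) atTop (nhds fun x : S => f x) := by
    rw [tendsto_pi_nhds]
    intro x
    refine tendsto_iff_dist_tendsto_zero.2 ?_
    refine squeeze_zero (fun _ => dist_nonneg) (fun n => ?_) tendsto_one_div_add_atTop_nhds_zero_nat
    rw [dist_comm, Real.dist_eq]
    exact hfm n x x.2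
  have hmem : (fun x : S => f x) ∈ W := hW.mem_of_tendsto hlim (Eventually.of_forall fun n =>
    ⟨m n, (MvPolynomial.mem_restrictTotalDegree _ _ _).2 (hm n), rfl⟩)
  obtain ⟨q, hq, he⟩ := hmem
  refine ⟨q, (MvPolynomial.mem_restrictTotalDegree _ _ _).1 hq, fun x hx => ?_⟩
  have : MvPolynomial.eval x q = f x := congrFun he ⟨x, hx⟩
  simp [this]

/-- By uniform continuity, constants approximate `f` within `η` on all sufficiently small cubes. -/
lemma exists_fine_scale {d : ℕ} (k : ℕ) {f : (Fin d → ℝ) → ℝ} {η : ℝ} (hη : 0 < η)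
    (hf : UniformContinuousOn f (unitCube d)) :
    ∃ J : ℕ, ∀ (y : Fin d → ℝ) (r : ℝ), 0 < r → r ≤ 1 / 2 ^ J → cubeAt y r ⊆ unitCube d →
      Approx d k f η (cubeAt y r) := by
  obtain ⟨δ, hδ, hfδ⟩ := Metric.uniformContinuousOn_iff.1 hf η hη
  obtain ⟨J, hJ⟩ := exists_pow_lt_of_lt_one hδ (by norm_num : (1 / 2 : ℝ) < 1)
  refine ⟨J, fun y r hr hrJ hsub => ⟨MvPolynomial.C (f y), by simp, fun x hx => ?_⟩⟩
  have hy : y ∈ cubeAt y r := mem_cubeAt.2 fun i => ⟨le_rfl, by linarith⟩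
  rw [MvPolynomial.eval_C, ← Real.dist_eq]
  refine (hfδ x (hsub hx) y (hsub hy) ?_).le
  rw [one_div_pow] at hJ
  refine lt_of_le_of_lt ?_ hJ
  rw [dist_pi_le_iff (by positivity)]
  intro i
  have := mem_cubeAt.1 hx i
  rw [Real.dist_eq, abs_le]
  constructor <;> linarith

/-- A disjoint family of bad cubes has at most `(|f|_V / η)^p` members. -/
lemma BadFamily.card_le {d k : ℕ} {f : (Fin d → ℝ) → ℝ} {η p v : ℝ} (hp : 1 ≤ p) (hη : 0 < η)
    (hv : 0 ≤ v) (hf : ContinuousOn f (unitCube d))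
    (hV : varpk d k p ⊤ f (unitCube d) ≤ ENNReal.ofReal v)
    {F : Finset (Set (Fin d → ℝ))} (hF : BadFamily d k f η (unitCube d) F) :
    (F.card : ℝ) * η ^ p ≤ v ^ p := by
  have hp0 : 0 < p := by linarith
  have h1 : (∑ Q ∈ F, Ek d k ⊤ f Q ^ p) ^ (1 / p) ≤ ENNReal.ofReal v := by
    refine le_trans ?_ hV
    unfold varpk
    refine le_iSup_of_le F ?_
    rw [iSup_pos fun Q hQ => ⟨(hF.1 Q hQ).1, (hF.1 Q hQ).2.1⟩, iSup_pos hF.2]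
  have h2 : ∑ Q ∈ F, Ek d k ⊤ f Q ^ p ≤ ENNReal.ofReal v ^ p := by
    rw [one_div] at h1
    exact (ENNReal.rpow_inv_le_iff hp0).1 h1
  have h3 : (F.card : ℝ≥0∞) * ENNReal.ofReal η ^ p ≤ ∑ Q ∈ F, Ek d k ⊤ f Q ^ p := by
    rw [← nsmul_eq_mul]
    refine Finset.card_nsmul_le_sum _ _ _ fun Q hQ => ?_
    refine ENNReal.rpow_le_rpow (not_lt.1 fun hlt => ?_) hp0.le
    exact (hF.1 Q hQ).2.2 (approx_of_Ek_lt (hF.1 Q hQ).1 (hf.mono (hF.1 Q hQ).2.1) hlt)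
  have h4 := h3.trans h2
  rw [ENNReal.ofReal_rpow_of_nonneg hη.le hp0.le, ENNReal.ofReal_rpow_of_nonneg hv hp0.le,
    ← ENNReal.ofReal_natCast, ← ENNReal.ofReal_mul (by positivity),
    ENNReal.ofReal_le_ofReal_iff (by positivity)] at h4
  exact h4

lemma isCube_unitCube (d : ℕ) : IsCube d (unitCube d) :=
  ⟨fun _ => 0, 1, one_pos, by simp [unitCube]⟩

lemma isDyadicCube_unitCube (d : ℕ) : IsDyadicCube d (unitCube d) := by
  rw [← dyadic_zero]; exact isDyadicCube_dyadic fun _ => by simp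

lemma Ek_unitCube_le {d k : ℕ} {f : (Fin d → ℝ) → ℝ} {p : ℝ} (hp : 1 ≤ p) :
    Ek d k ⊤ f (unitCube d) ≤ varpk d k p ⊤ f (unitCube d) := by
  have h : (∑ Q ∈ {unitCube d}, Ek d k ⊤ f Q ^ p) ^ (1 / p) ≤ varpk d k p ⊤ f (unitCube d) :=
    le_iSup_of_le {unitCube d} (le_iSup_of_le (by
      intro Q hQ
      rw [Finset.mem_singleton.1 hQ]
      exact ⟨isCube_unitCube d, subset_rfl⟩) (le_iSup_of_le (by simp) le_rfl))
  rw [Finset.sum_singleton, one_div, ENNReal.rpow_rpow_inv (by linarith)] at h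
  exact h

/-- Adding the unit cube, with the zero polynomial if it is not already present, turns any
representation into one whose cubes cover. -/
lemma HasPieces.cover {d k n : ℕ} {g : (Fin d → ℝ) → ℝ} (hg : HasPieces d k n g) :
    ∃ (Δ : Finset (Set (Fin d → ℝ))) (P : Set (Fin d → ℝ) → MvPolynomial (Fin d) ℝ),
      Δ.card ≤ n + 1 ∧ (∀ Q ∈ Δ, IsDyadicCube d Q) ∧ (⋃ Q ∈ Δ, Q) = unitCube d ∧
      (∀ Q ∈ Δ, (P Q).totalDegree ≤ k - 1) ∧ ∀ x, g x = piecewisePoly d Δ P x := by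
  classical
  obtain ⟨Δ, P, h1, h2, h3, h4, h5⟩ := hg
  have h6 : ∀ Q ∈ insert (unitCube d) Δ, IsDyadicCube d Q := by
    intro Q hQ
    rcases Finset.mem_insert.1 hQ with rfl | h
    · exact isDyadicCube_unitCube d
    · exact h2 Q h
  refine ⟨insert (unitCube d) Δ, P, (Finset.card_insert_le _ _).trans (by omega), h6, ?_,
    fun Q _ => h3 Q, fun x => ?_⟩
  · refine subset_antisymm (Set.iUnion₂_subset fun Q hQ => (h6 Q hQ).subset_unitCube) ?_
    exact Set.subset_biUnion_of_mem (u := fun Q => Q) (Finset.mem_insert_self (unitCube d) Δ)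
  · rw [h5, piecewisePoly_of_subset (Finset.subset_insert _ _) h4]

lemma measurableSet_unitCube (d : ℕ) : MeasurableSet (unitCube d) :=
  MeasurableSet.univ_pi fun _ => measurableSet_Ico

lemma eLpNorm_top_le {d : ℕ} {h : (Fin d → ℝ) → ℝ} {R : ℝ} (hR : ∀ x ∈ unitCube d, |h x| ≤ R) :
    eLpNorm h ⊤ (volume.restrict (unitCube d)) ≤ ENNReal.ofReal R := by
  rw [eLpNorm_exponent_top]
  refine eLpNormEssSup_le_of_ae_bound ?_
  exact ae_restrict_of_forall_mem (measurableSet_unitCube d) hR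

/-- The case of a single polynomial on the unit cube. -/
lemma Approx.exists_single {d k N : ℕ} {f : (Fin d → ℝ) → ℝ} {R : ℝ}
    (h : Approx d k f R (unitCube d)) (hN : 1 ≤ N) :
    ∃ (Δ : Finset (Set (Fin d → ℝ))) (P : Set (Fin d → ℝ) → MvPolynomial (Fin d) ℝ),
      Δ.card ≤ N ∧ (∀ Q ∈ Δ, IsDyadicCube d Q) ∧ (⋃ Q ∈ Δ, Q) = unitCube d ∧
      (∀ Q ∈ Δ, (P Q).totalDegree ≤ k - 1) ∧
      eLpNorm (fun x => f x - piecewisePoly d Δ P x) ⊤ (volume.restrict (unitCube d)) ≤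
        ENNReal.ofReal R := by
  obtain ⟨m, hm, hfm⟩ := h
  refine ⟨{unitCube d}, fun _ => m, by simpa using hN, by simpa using isDyadicCube_unitCube d,
    by simp, fun _ _ => hm, eLpNorm_top_le fun x hx => ?_⟩
  simpa [piecewisePoly, hx] using hfm x hx

/-- Theorem 2.1(a), `q = ∞`: for `d ≥ 2`, `1 ≤ p < ∞`,
`s = d/p` with `0 < s ≤ k`, every uniformly continuous `f` on `[0,1)^d` with
finite `(k,p)`-variation (in `L_∞`) admits, for each `N`, a covering of
`[0,1)^d` by at most `N` dyadic cubes and a piecewise polynomial of degree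
`k-1` over it approximating `f` in `L_∞` to within
`c(k,d) N^{-s/d} |f|_{V_{p∞}^k}`. -/
theorem statement1 (d k : ℕ) (hd : 2 ≤ d) :
    ∃ c : ℝ, 0 < c ∧
      ∀ (p s : ℝ), 1 ≤ p →
        s = d / p → 0 < s → s ≤ k →
        ∀ f : (Fin d → ℝ) → ℝ,
          UniformContinuousOn f (unitCube d) →
          varpk d k p ⊤ f (unitCube d) < ⊤ →
          ∀ N : ℕ, 1 ≤ N →
            ∃ (Δ : Finset (Set (Fin d → ℝ)))
              (P : Set (Fin d → ℝ) → MvPolynomial (Fin d) ℝ),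
              Δ.card ≤ N ∧
              (∀ Q ∈ Δ, IsDyadicCube d Q) ∧
              (⋃ Q ∈ Δ, Q) = unitCube d ∧
              (∀ Q ∈ Δ, (P Q).totalDegree ≤ k - 1) ∧
              eLpNorm (fun x => f x - piecewisePoly d Δ P x)
                  ⊤ (volume.restrict (unitCube d)) ≤
                ENNReal.ofReal (c * (N : ℝ) ^ (-(s / d))) *
                  varpk d k p ⊤ f (unitCube d) := by
  rcases Nat.eq_zero_or_pos k with rfl | hk
  · -- the hypotheses `0 < s ≤ k` are contradictory for `k = 0`
    refine ⟨1, one_pos, fun p s _ _ h0 h1 => ?_⟩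
    simp at h1
    linarith
  obtain ⟨C, hC⟩ := exists_remezConst d k hk
  set A : ℕ := 2 * 2 ^ d + 4 with hA
  have hC1 := hC.1
  have hA1 : (1 : ℝ) ≤ A := by rw [hA]; push_cast; nlinarith [pow_pos (two_pos (α := ℝ)) d]
  refine ⟨39 * C * A + 2, by positivity, ?_⟩
  intro p s hp hs _ _ f hf hV N hN
  have hp0 : 0 < p := by linarith
  have hd0 : (d : ℝ) ≠ 0 := by positivity
  have hsd : s / d = 1 / p := by rw [hs]; field_simp
  rw [hsd]
  set v : ℝ := (varpk d k p ⊤ f (unitCube d)).toReal with hv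
  have hVv : varpk d k p ⊤ f (unitCube d) = ENNReal.ofReal v :=
    (ENNReal.ofReal_toReal hV.ne).symm
  have hv0 : 0 ≤ v := ENNReal.toReal_nonneg
  have hEv : Ek d k ⊤ f (unitCube d) ≤ ENNReal.ofReal v := hVv ▸ Ek_unitCube_le hp
  have hfc := hf.continuousOn
  have hN0 : (0 : ℝ) < N := by exact_mod_cast hN
  rw [hVv, ← ENNReal.ofReal_mul (by positivity)]
  have hwhole : ∀ η : ℝ, v < η → Approx d k f η (unitCube d) := fun η hη =>
    approx_of_Ek_lt (isCube_unitCube d) hfc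
      (hEv.trans_lt ((ENNReal.ofReal_lt_ofReal_iff (by linarith)).2 hη))
  rcases hv0.eq_or_lt with hv00 | hvpos
  · rw [← hv00, mul_zero]
    exact (approx_zero fun η hη => hwhole η (by linarith)).exists_single hN
  rcases hN.eq_or_lt with hN1 | hN2
  · obtain ⟨Δ, P, h1, h2, h3, h4, h5⟩ := (hwhole (2 * v) (by linarith)).exists_single hN
    refine ⟨Δ, P, h1, h2, h3, h4, h5.trans (ENNReal.ofReal_le_ofReal ?_)⟩
    rw [← hN1]
    simp only [Nat.cast_one, Real.one_rpow, mul_one]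
    have : 0 ≤ 39 * C * A := by positivity
    nlinarith
  -- the threshold is chosen so that at most `N / A` disjoint cubes are bad
  set η : ℝ := v * (A / N : ℝ) ^ (1 / p) with hη
  have hη0 : 0 < η := by positivity
  have hηp : η ^ p = v ^ p * (A / N) := by
    rw [hη, Real.mul_rpow hv0 (by positivity), ← Real.rpow_mul (by positivity),
      one_div_mul_cancel hp0.ne', Real.rpow_one]
  have hηle : η ≤ A * (N : ℝ) ^ (-(1 / p)) * v := by
    have h1 : (A : ℝ) ^ (1 / p) ≤ A := by
      calc (A : ℝ) ^ (1 / p) ≤ (A : ℝ) ^ (1 : ℝ) :=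
            Real.rpow_le_rpow_of_exponent_le hA1 (by rw [div_le_one hp0]; exact hp)
        _ = A := Real.rpow_one _
    rw [hη, Real.div_rpow (by positivity) hN0.le, Real.rpow_neg hN0.le, div_eq_mul_inv,
      mul_comm v]
    gcongr
  obtain ⟨J, hJ⟩ := exists_fine_scale k hη0 hf
  obtain ⟨g, n, F, hg, -, hfg, hF, hn⟩ :=
    decomposition hd hC hη0.le J hJ J 0 (fun _ => 0) (by simp) (by simp)
  rw [dyadic_zero] at hfg hF
  have hcard : A * F.card ≤ N := by
    have h := hF.card_le hp hη0 hv0 hfc hVv.le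
    rw [hηp] at h
    have hvp : 0 < v ^ p := by positivity
    have h2 : (F.card : ℝ) * (A / N) ≤ 1 := by
      by_contra hcon
      nlinarith
    rw [mul_div_assoc', div_le_one hN0] at h2
    rw [mul_comm]
    exact_mod_cast h2
  have hnN : n + 1 ≤ N := by
    rcases hn with h | h
    · omega
    · rw [← hA] at h
      omega
  obtain ⟨Δ, P, h1, h2, h3, h4, h5⟩ := hg.cover
  refine ⟨Δ, P, h1.trans hnN, h2, h3, h4, eLpNorm_top_le fun x hx => ?_⟩
  rw [← h5]
  refine (hfg x hx).trans ?_
  have h6 : 0 ≤ (N : ℝ) ^ (-(1 / p)) * v := by positivity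
  calc 39 * C * η ≤ 39 * C * (A * (N : ℝ) ^ (-(1 / p)) * v) := by gcongr
    _ ≤ (39 * C * A + 2) * (N : ℝ) ^ (-(1 / p)) * v := by nlinarith
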